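/- Let F be a layer solution with data (V, g) and suppose V > ∫_0^L ξ g(ξ) dξ (shock case). Set u_∞ = √(2V). Then ∫_{−L}^{L} |F(y, ξ) − M(−u_∞, ξ)| dξ → 0 as y → ∞. -/

import Mathlib

/-!
The density `u(y) = ∫ F(y, ξ) dξ` controls everything: once `u` converges, each `F(·, ξ)` solves a
linear relaxation equation with an eventually constant source, hence converges for `ξ > 0`, while
for `ξ < 0` the equation is unstable and boundedness forces `F` to equal its source. Dominated
convergence then gives the convergence in `L¹`.

Convergence of `u²`. The second moment `∫ ξ² F dξ` has derivative `∫ ξ (M(u, ξ) - F) dξ`, equal to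
`u² / 2 - V` by the flux condition, and this is nonpositive because the Maxwellian minimises the
first moment among functions of the same density and sign bounds (`IsLayerSolution.sq_le`). The
moment is bounded, so it converges; as `u` is uniformly continuous (`IsLayerSolution.uniform`), a
Barbalat argument gives `u² → 2 V` (`IsLayerSolution.tendsto_sq`).

Sign of the limit. The shock hypothesis with `g ≥ 0` gives `V > 0`, so `u` is eventually of constant
sign. Wherever `u > 0` from a point onwards, `F` vanishes at that point for all `ξ < 0`. At the
last point where `u ≤ 0` this forces `F = 0`, hence `V = 0`; and if `u > 0` throughout, the flux at
`y = 0` equals `∫ ξ g dξ < V`. Both are absurd (`IsLayerSolution.not_eventually_pos`), so `u` tends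
to the negative root.
-/

open MeasureTheory Set Filter

/-- The Maxwellian `M(u, ξ)`: equals `1` on `0 < ξ < u`, `-1` on `u < ξ < 0`, `0` otherwise. -/
noncomputable def Mfun (u ξ : ℝ) : ℝ :=
  if 0 < ξ ∧ ξ < u then 1 else if u < ξ ∧ ξ < 0 then -1 else 0

/-- A layer solution with data `(V, g)`: `F : [0,∞) × (-L,L) → ℝ` measurable, with
`0 ≤ sign ξ · F(y,ξ) ≤ 1`; for each `ξ ≠ 0`, `y ↦ F(y,ξ)` is continuous on `[0,∞)`,
differentiable on `(0,∞)` with `ξ ∂_y F = M(u(y),ξ) - F`, `u(y) = ∫_{-L}^L F(y,·)`;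
`F(0,ξ) = g(ξ)` on `(0,L)`; and `∫_{-L}^L ξ F(y,ξ) dξ = V` for all `y ≥ 0`. -/
structure IsLayerSolution (L V : ℝ) (g : ℝ → ℝ) (F : ℝ → ℝ → ℝ) : Prop where
  meas : Measurable (Function.uncurry F)
  sgnBound : ∀ y ξ, 0 ≤ y → ξ ∈ Set.Ioo (-L) L →
    0 ≤ Real.sign ξ * F y ξ ∧ Real.sign ξ * F y ξ ≤ 1
  cont : ∀ ξ ∈ Set.Ioo (-L) L, ξ ≠ 0 → ContinuousOn (fun y => F y ξ) (Set.Ici 0)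
  eqn : ∀ ξ ∈ Set.Ioo (-L) L, ξ ≠ 0 → ∀ y : ℝ, 0 < y →
    ∃ d : ℝ, HasDerivAt (fun z => F z ξ) d y ∧
      ξ * d = Mfun (∫ ζ in (-L)..L, F y ζ) ξ - F y ξ
  bdry : ∀ ξ ∈ Set.Ioo (0 : ℝ) L, F 0 ξ = g ξ
  flux : ∀ y : ℝ, 0 ≤ y → (∫ ξ in (-L)..L, ξ * F y ξ) = V

/-! ### The scalar relaxation equation on a half-line -/

theorem decay_formula {w : ℝ → ℝ} {N ξ : ℝ} (hξ : ξ ≠ 0) (hc : ContinuousOn w (Ici N))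
    (hd : ∀ y, N < y → ∃ d, HasDerivAt w d y ∧ ξ * d = -w y) :
    ∀ y, N ≤ y → w y = w N * Real.exp (-(y - N) / ξ) := by
  intro y hy
  have key : w y * Real.exp ((y - N) / ξ) = w N := by
    rcases hy.eq_or_lt with rfl | hlt
    · simp
    have hD : ∀ z, HasDerivAt (fun z => Real.exp ((z - N) / ξ))
        (Real.exp ((z - N) / ξ) * (1 / ξ)) z := fun z =>
      (((hasDerivAt_id z).sub_const N).div_const ξ).exp
    have hce : Continuous (fun z => Real.exp ((z - N) / ξ)) := by fun_prop
    obtain ⟨c, hcm, hce'⟩ := exists_hasDerivAt_eq_slope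
      (fun z => w z * Real.exp ((z - N) / ξ)) (fun _ => 0) hlt
      ((hc.mono Icc_subset_Ici_self).mul hce.continuousOn) (by
        intro z hz
        obtain ⟨d, hd1, hd2⟩ := hd z hz.1
        refine (hd1.mul (hD z)).congr_deriv ?_
        have : w z = -(ξ * d) := by linarith
        rw [this]; field_simp; ring)
    have h2 : y - N ≠ 0 := by linarith
    rw [eq_comm, div_eq_zero_iff] at hce'
    have := hce'.resolve_right h2
    simp at this
    linarith
  have h1 : Real.exp ((y - N) / ξ) * Real.exp (-(y - N) / ξ) = 1 := by
    rw [← Real.exp_add, neg_div, add_neg_cancel, Real.exp_zero]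
  rw [← key, mul_assoc, h1, mul_one]

theorem decay_pos {w : ℝ → ℝ} {N ξ : ℝ} (hξ : 0 < ξ) (hc : ContinuousOn w (Ici N))
    (hd : ∀ y, N < y → ∃ d, HasDerivAt w d y ∧ ξ * d = -w y) :
    Tendsto w atTop (nhds 0) := by
  have h1 : Tendsto (fun y => (y - N) / ξ) atTop atTop :=
    (tendsto_atTop_add_const_right _ (-N) tendsto_id).atTop_div_const hξ
  have h2 := (Real.tendsto_exp_neg_atTop_nhds_zero.comp h1).const_mul (w N)
  rw [mul_zero] at h2
  refine h2.congr' ?_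
  filter_upwards [eventually_ge_atTop N] with y hy
  rw [decay_formula hξ.ne' hc hd y hy, neg_div]
  rfl

/-- For `ξ < 0` the equation is exponentially unstable as `y → ∞`, so its only bounded solution
is zero. -/
theorem bounded_neg {w : ℝ → ℝ} {N ξ B : ℝ} (hξ : ξ < 0) (hc : ContinuousOn w (Ici N))
    (hd : ∀ y, N < y → ∃ d, HasDerivAt w d y ∧ ξ * d = -w y)
    (hB : ∀ y, N ≤ y → |w y| ≤ B) : ∀ y, N ≤ y → w y = 0 := by
  have h0 : w N = 0 := by
    by_contra hne
    have h1 : Tendsto (fun y => (y - N) / (-ξ)) atTop atTop :=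
      (tendsto_atTop_add_const_right _ (-N) tendsto_id).atTop_div_const (by linarith)
    have h2 := (Real.tendsto_exp_atTop.comp h1).const_mul_atTop (abs_pos.2 hne)
    obtain ⟨y, hy1, hy2⟩ := ((h2.eventually_gt_atTop B).and (eventually_ge_atTop N)).exists
    have h3 := hB y hy2
    rw [decay_formula hξ.ne hc hd y hy2, abs_mul, Real.abs_exp, neg_div, ← div_neg] at h3
    simp only [Function.comp] at hy1
    linarith
  intro y hy
  rw [decay_formula hξ.ne hc hd y hy, h0, zero_mul]

/-! ### The Maxwellian and its moments -/

theorem Mfun_eq_indicator (u ξ : ℝ) :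
    Mfun u ξ = (Ioo 0 u).indicator 1 ξ - (Ioo u 0).indicator 1 ξ := by
  unfold Mfun
  by_cases h1 : 0 < ξ ∧ ξ < u
  · have : ¬ (u < ξ ∧ ξ < 0) := fun h => by linarith [h.1, h1.1, h.2]
    simp [indicator, h1, this]
  · by_cases h2 : u < ξ ∧ ξ < 0 <;> simp [indicator, h1, h2]

theorem measurable_Mfun (u : ℝ) : Measurable (Mfun u) := by
  have : Mfun u = fun ξ => (Ioo 0 u).indicator 1 ξ - (Ioo u 0).indicator 1 ξ :=
    funext (Mfun_eq_indicator u)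
  rw [this]
  exact (measurable_one.indicator measurableSet_Ioo).sub
    (measurable_one.indicator measurableSet_Ioo)

theorem abs_Mfun_le (u ξ : ℝ) : |Mfun u ξ| ≤ 1 := by
  unfold Mfun; split_ifs <;> simp

theorem Mfun_pos_mem {u ξ : ℝ} (h : 0 < ξ) : 0 ≤ Mfun u ξ ∧ Mfun u ξ ≤ 1 := by
  unfold Mfun; split_ifs with h1 h2
  · simp
  · linarith [h2.2]
  · simp

theorem Mfun_neg_mem {u ξ : ℝ} (h : ξ < 0) : -1 ≤ Mfun u ξ ∧ Mfun u ξ ≤ 0 := by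
  unfold Mfun; split_ifs with h1 h2
  · linarith [h1.1]
  · simp
  · simp

theorem integral_mul_Mfun {L u : ℝ} (hu : |u| ≤ L) {h : ℝ → ℝ} (hh : Continuous h) :
    ∫ ξ in Ioo (-L) L, h ξ * Mfun u ξ = ∫ ξ in (0 : ℝ)..u, h ξ := by
  obtain ⟨hu1, hu2⟩ := abs_le.1 hu
  have hi : ∀ a b, IntegrableOn h (Ioo a b) := fun a b =>
    (hh.continuousOn.integrableOn_Icc).mono_set Ioo_subset_Icc_self
  have e : ∀ ξ, h ξ * Mfun u ξ = (Ioo 0 u).indicator h ξ - (Ioo u 0).indicator h ξ := by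
    intro ξ
    rw [Mfun_eq_indicator]
    by_cases h1 : ξ ∈ Ioo 0 u <;> by_cases h2 : ξ ∈ Ioo u 0 <;> simp [h1, h2]
  simp_rw [e]
  have hA : Ioo (-L) L ∩ Ioo 0 u = Ioo 0 u := by
    rw [inter_eq_right]
    intro x hx; exact ⟨by linarith [hx.1, hx.2], by linarith [hx.2]⟩
  have hB : Ioo (-L) L ∩ Ioo u 0 = Ioo u 0 := by
    rw [inter_eq_right]
    intro x hx; exact ⟨by linarith [hx.1, hx.2], by linarith [hx.1, hx.2]⟩
  rw [integral_sub ((hi (-L) L).indicator measurableSet_Ioo)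
      ((hi (-L) L).indicator measurableSet_Ioo),
    setIntegral_indicator measurableSet_Ioo, setIntegral_indicator measurableSet_Ioo, hA, hB,
    ← integral_Ioc_eq_integral_Ioo, ← integral_Ioc_eq_integral_Ioo]
  rfl

/-- Away from the jump `ξ = v`, the Maxwellian is locally constant in its first argument near `v`. -/
theorem eventually_Mfun_eq {u : ℝ → ℝ} {v ξ : ℝ} (hu : Tendsto u atTop (nhds v)) (h : ξ ≠ v) :
    ∀ᶠ y in atTop, Mfun (u y) ξ = Mfun v ξ := by
  rcases lt_or_gt_of_ne h with h | h
  · filter_upwards [hu.eventually_const_lt h] with y hy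
    unfold Mfun
    simp [h, hy, hy.not_gt, h.not_gt]
  · filter_upwards [hu.eventually_lt_const h] with y hy
    unfold Mfun
    simp [h, hy, hy.not_gt, h.not_gt]

/-! ### Bounds on layer solutions and the entropy inequality -/

section Layer

variable {L V : ℝ} {g : ℝ → ℝ} {F : ℝ → ℝ → ℝ}

/-- The macroscopic density `u(y) = ∫ F(y, ζ) dζ`, as an integral over the open interval. -/
noncomputable def dens (L : ℝ) (F : ℝ → ℝ → ℝ) (y : ℝ) : ℝ := ∫ ζ in Ioo (-L) L, F y ζ

theorem interval_eq_Ioo (hL : 0 < L) (f : ℝ → ℝ) :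
    ∫ ξ in (-L)..L, f ξ = ∫ ξ in Ioo (-L) L, f ξ := by
  rw [intervalIntegral.integral_of_le (by linarith), integral_Ioc_eq_integral_Ioo]

theorem ae_mem_Ioo (L v : ℝ) : ∀ᵐ ξ ∂(volume.restrict (Ioo (-L) L)),
    ξ ∈ Ioo (-L) L ∧ ξ ≠ 0 ∧ ξ ≠ v := by
  filter_upwards [ae_restrict_mem measurableSet_Ioo, ae_restrict_of_ae (Measure.ae_ne volume 0),
    ae_restrict_of_ae (Measure.ae_ne volume v)] with ξ h1 h2 h3 using ⟨h1, h2, h3⟩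

theorem IsLayerSolution.pos (hF : IsLayerSolution L V g F) {y ξ : ℝ} (hy : 0 ≤ y)
    (hξ : ξ ∈ Ioo (-L) L) (h : 0 < ξ) : 0 ≤ F y ξ ∧ F y ξ ≤ 1 := by
  simpa [Real.sign_of_pos h] using hF.sgnBound y ξ hy hξ

theorem IsLayerSolution.neg (hF : IsLayerSolution L V g F) {y ξ : ℝ} (hy : 0 ≤ y)
    (hξ : ξ ∈ Ioo (-L) L) (h : ξ < 0) : -1 ≤ F y ξ ∧ F y ξ ≤ 0 := by
  have := hF.sgnBound y ξ hy hξ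
  rw [Real.sign_of_neg h] at this
  constructor <;> linarith [this.1, this.2]

theorem IsLayerSolution.abs_le_one (hF : IsLayerSolution L V g F) {y ξ : ℝ} (hy : 0 ≤ y)
    (hξ : ξ ∈ Ioo (-L) L) (h0 : ξ ≠ 0) : |F y ξ| ≤ 1 := by
  rcases lt_or_gt_of_ne h0 with h | h
  · have := hF.neg hy hξ h; exact abs_le.2 ⟨this.1, by linarith⟩
  · have := hF.pos hy hξ h; exact abs_le.2 ⟨by linarith, this.2⟩

theorem IsLayerSolution.abs_Mfun_sub_le (hF : IsLayerSolution L V g F) {y ξ : ℝ} (u : ℝ)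
    (hy : 0 ≤ y) (hξ : ξ ∈ Ioo (-L) L) (h0 : ξ ≠ 0) : |Mfun u ξ - F y ξ| ≤ 1 := by
  rcases lt_or_gt_of_ne h0 with h | h
  · have := hF.neg hy hξ h
    have h2 := Mfun_neg_mem (u := u) h
    exact abs_le.2 ⟨by linarith, by linarith⟩
  · have := hF.pos hy hξ h
    have h2 := Mfun_pos_mem (u := u) h
    exact abs_le.2 ⟨by linarith, by linarith⟩

theorem IsLayerSolution.measF (hF : IsLayerSolution L V g F) (y : ℝ) : Measurable (F y) :=
  hF.meas.of_uncurry_left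

theorem integrable_Mfun (L u : ℝ) : Integrable (Mfun u) (volume.restrict (Ioo (-L) L)) :=
  Integrable.of_bound (measurable_Mfun u).aestronglyMeasurable 1
    (Eventually.of_forall fun ξ => abs_Mfun_le u ξ)

theorem IsLayerSolution.integrable (hF : IsLayerSolution L V g F) {y : ℝ} (hy : 0 ≤ y) :
    Integrable (F y) (volume.restrict (Ioo (-L) L)) := by
  refine Integrable.of_bound (hF.measF y).aestronglyMeasurable 1 ?_
  filter_upwards [ae_mem_Ioo L 0] with ξ h using hF.abs_le_one hy h.1 h.2.1

theorem integrable_id_mul {f : ℝ → ℝ} (hf : Integrable f (volume.restrict (Ioo (-L) L))) :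
    Integrable (fun ξ => ξ * f ξ) (volume.restrict (Ioo (-L) L)) := by
  refine hf.bdd_mul (c := L) measurable_id.aestronglyMeasurable ?_
  filter_upwards [ae_mem_Ioo L 0] with ξ h
  exact abs_le.2 ⟨h.1.1.le, h.1.2.le⟩

theorem IsLayerSolution.eqn' (hF : IsLayerSolution L V g F) (hL : 0 < L) {y ξ : ℝ}
    (hξ : ξ ∈ Ioo (-L) L) (h0 : ξ ≠ 0) (hy : 0 < y) :
    HasDerivAt (fun z => F z ξ) ((Mfun (dens L F y) ξ - F y ξ) / ξ) y := by
  obtain ⟨d, hd, he⟩ := hF.eqn ξ hξ h0 y hy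
  rw [interval_eq_Ioo hL] at he
  refine hd.congr_deriv ?_
  rw [eq_div_iff h0, mul_comm]; exact he

theorem IsLayerSolution.flux' (hF : IsLayerSolution L V g F) (hL : 0 < L) {y : ℝ} (hy : 0 ≤ y) :
    ∫ ξ in Ioo (-L) L, ξ * F y ξ = V := by
  rw [← interval_eq_Ioo hL]; exact hF.flux y hy

/-- The bound `|u| ≤ L`, rather than `2 L`, comes from `F` having the sign of `ξ`. -/
theorem IsLayerSolution.abs_dens_le (hF : IsLayerSolution L V g F) (hL : 0 < L) {y : ℝ}
    (hy : 0 ≤ y) : |dens L F y| ≤ L := by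
  have h1 : ∫ ξ in Ioo (-L) L, Mfun L ξ = L := by
    simpa using integral_mul_Mfun (abs_of_pos hL).le (h := fun _ => (1 : ℝ)) continuous_const
  have h2 : ∫ ξ in Ioo (-L) L, Mfun (-L) ξ = -L := by
    simpa using integral_mul_Mfun (u := -L) (by rw [abs_neg, abs_of_pos hL])
      (h := fun _ => (1 : ℝ)) continuous_const
  refine abs_le.2 ⟨?_, ?_⟩
  · refine le_of_eq_of_le h2.symm
      (integral_mono_ae (integrable_Mfun L (-L)) (hF.integrable hy) ?_)
    filter_upwards [ae_mem_Ioo L 0] with ξ h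
    rcases lt_or_gt_of_ne h.2.1 with h0 | h0
    · have := hF.neg hy h.1 h0
      simpa [Mfun, h0, h.1.1, h0.not_gt] using this.1
    · have := hF.pos hy h.1 h0
      simpa [Mfun, h0, h0.not_gt, h.1.1, (show ¬ ξ < -L by linarith [h.1.1])] using this.1
  · refine le_of_le_of_eq (integral_mono_ae (hF.integrable hy) (integrable_Mfun L L) ?_) h1
    filter_upwards [ae_mem_Ioo L 0] with ξ h
    rcases lt_or_gt_of_ne h.2.1 with h0 | h0
    · have := hF.neg hy h.1 h0
      simpa [Mfun, h0, h0.not_gt, (show ¬ L < ξ by linarith [h.1.2])] using this.2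
    · have := hF.pos hy h.1 h0
      simpa [Mfun, h0, h.1.2] using this.2

theorem IsLayerSolution.integral_id_sub (hF : IsLayerSolution L V g F) (hL : 0 < L) {y : ℝ}
    (hy : 0 ≤ y) : ∫ ξ in Ioo (-L) L, ξ * (Mfun (dens L F y) ξ - F y ξ)
      = (dens L F y) ^ 2 / 2 - V := by
  simp_rw [mul_sub]
  rw [integral_sub (integrable_id_mul (integrable_Mfun _ _))
    (integrable_id_mul (hF.integrable hy)), hF.flux' hL hy,
    integral_mul_Mfun (hF.abs_dens_le hL hy) continuous_id']
  simp

/-- Entropy inequality `u² / 2 ≤ V`: among functions with the given density and sign bounds, the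
Maxwellian has the least first moment, because `(ξ - u) (M(u, ξ) - F) ≤ 0` pointwise. -/
theorem IsLayerSolution.sq_le (hF : IsLayerSolution L V g F) (hL : 0 < L) {y : ℝ}
    (hy : 0 ≤ y) : (dens L F y) ^ 2 / 2 - V ≤ 0 := by
  set u := dens L F y with hu
  have h1 : ∫ ξ in Ioo (-L) L, (Mfun u ξ - F y ξ) = 0 := by
    rw [integral_sub (integrable_Mfun _ _) (hF.integrable hy)]
    have := integral_mul_Mfun (hF.abs_dens_le hL hy) (h := fun _ => (1 : ℝ)) continuous_const
    simp only [one_mul] at this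
    rw [← hu] at this
    rw [this]
    simp [hu, dens]
  have hint : Integrable (fun ξ => Mfun u ξ - F y ξ) (volume.restrict (Ioo (-L) L)) :=
    (integrable_Mfun L u).sub (hF.integrable hy)
  have h2 : ∫ ξ in Ioo (-L) L, (ξ * (Mfun u ξ - F y ξ) - u * (Mfun u ξ - F y ξ))
      = u ^ 2 / 2 - V := by
    rw [integral_sub (integrable_id_mul hint) (hint.const_mul u), integral_const_mul, h1,
      hF.integral_id_sub hL hy]
    ring
  rw [← h2]
  refine integral_nonpos_of_ae ?_
  filter_upwards [ae_mem_Ioo L 0] with ξ h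
  rw [← sub_mul, Pi.zero_apply]
  rcases lt_or_gt_of_ne h.2.1 with h0 | h0
  · have := hF.neg hy h.1 h0
    rcases lt_or_ge u ξ with h3 | h3
    · have : Mfun u ξ = -1 := by simp [Mfun, h0, h0.not_gt, h3]
      rw [this]; nlinarith
    · have : Mfun u ξ = 0 := by simp [Mfun, h0.not_gt, h3.not_gt]
      rw [this]; nlinarith
  · have := hF.pos hy h.1 h0
    rcases lt_or_ge ξ u with h3 | h3
    · have : Mfun u ξ = 1 := by simp [Mfun, h0, h3]
      rw [this]; nlinarith
    · have : Mfun u ξ = 0 := by simp [Mfun, h0.not_gt, h3.not_gt]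
      rw [this]; nlinarith

/-! ### Uniform continuity of the density and convergence of its square -/

theorem IsLayerSolution.abs_sub_le (hF : IsLayerSolution L V g F) (hL : 0 < L) {a b ξ : ℝ}
    (hξ : ξ ∈ Ioo (-L) L) (h0 : ξ ≠ 0) (ha : 0 ≤ a) (hab : a ≤ b) :
    |F b ξ - F a ξ| ≤ min 1 ((b - a) / |ξ|) := by
  refine le_min ?_ ?_
  · rcases lt_or_gt_of_ne h0 with h | h
    · have h1 := hF.neg ha hξ h
      have h2 := hF.neg (ha.trans hab) hξ h
      exact abs_le.2 ⟨by linarith, by linarith⟩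
    · have h1 := hF.pos ha hξ h
      have h2 := hF.pos (ha.trans hab) hξ h
      exact abs_le.2 ⟨by linarith, by linarith⟩
  · rcases hab.eq_or_lt with rfl | hlt
    · simp
    obtain ⟨c, hc, he⟩ := exists_hasDerivAt_eq_slope (fun z => F z ξ)
      (fun z => (Mfun (dens L F z) ξ - F z ξ) / ξ) hlt
      ((hF.cont ξ hξ h0).mono fun z hz => ha.trans hz.1)
      (fun z hz => hF.eqn' hL hξ h0 (ha.trans_lt hz.1))
    have hba : 0 < b - a := by linarith
    have h1 : F b ξ - F a ξ = (Mfun (dens L F c) ξ - F c ξ) / ξ * (b - a) := by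
      rw [he]; field_simp
    rw [h1, abs_mul, abs_div, abs_of_pos hba, div_mul_eq_mul_div]
    have h2 := hF.abs_Mfun_sub_le (dens L F c) (ha.trans hc.1.le) hξ h0
    gcongr
    nlinarith

/-- The density is uniformly continuous, with a modulus `∫ min(1, h / |ξ|) dξ` that tends to zero
with `h`. -/
theorem IsLayerSolution.uniform (hF : IsLayerSolution L V g F) (hL : 0 < L) {ε : ℝ} (hε : 0 < ε) :
    ∃ δ > 0, ∀ a b, 0 ≤ a → a ≤ b → b ≤ a + δ → |dens L F b - dens L F a| ≤ ε := by
  have ht : Tendsto (fun h : ℝ => ∫ ξ in Ioo (-L) L, min 1 (h / |ξ|)) (nhdsWithin 0 (Ioi 0))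
      (nhds (∫ ξ in Ioo (-L) L, (0 : ℝ))) := by
    refine tendsto_integral_filter_of_dominated_convergence (fun _ => (1 : ℝ)) ?_ ?_
      (integrable_const _) ?_
    · exact Eventually.of_forall fun h => by
        apply Measurable.aestronglyMeasurable; fun_prop
    · filter_upwards [self_mem_nhdsWithin] with h hh
      refine Eventually.of_forall fun ξ => ?_
      have : 0 ≤ h / |ξ| := div_nonneg (le_of_lt hh) (abs_nonneg _)
      rw [Real.norm_eq_abs, abs_of_nonneg (le_min zero_le_one this)]
      exact min_le_left _ _
    · refine Eventually.of_forall fun ξ => ?_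
      have : Continuous (fun h : ℝ => min 1 (h / |ξ|)) := by fun_prop
      simpa using (this.tendsto 0).mono_left nhdsWithin_le_nhds
  rw [integral_zero] at ht
  obtain ⟨δ, h1, h2⟩ := ((ht.eventually_lt_const hε).and self_mem_nhdsWithin).exists
  refine ⟨δ, h2, fun a b ha hab hb => ?_⟩
  have hb0 := ha.trans hab
  have e : dens L F b - dens L F a = ∫ ξ in Ioo (-L) L, (F b ξ - F a ξ) := by
    rw [integral_sub (hF.integrable hb0) (hF.integrable ha)]; rfl
  rw [e]
  refine (norm_integral_le_of_norm_le (f := fun ξ => F b ξ - F a ξ)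
    (g := fun ξ => min 1 (δ / |ξ|)) ?_ ?_).trans h1.le
  · refine Integrable.of_bound (by apply Measurable.aestronglyMeasurable; fun_prop) 1 ?_
    refine Eventually.of_forall fun ξ => ?_
    have : 0 ≤ δ / |ξ| := div_nonneg (le_of_lt h2) (abs_nonneg _)
    rw [Real.norm_eq_abs, abs_of_nonneg (le_min zero_le_one this)]
    exact min_le_left _ _
  · filter_upwards [ae_mem_Ioo L 0] with ξ h
    refine (hF.abs_sub_le hL h.1 h.2.1 ha hab).trans ?_
    gcongr
    linarith

theorem IsLayerSolution.continuousOn_dens (hF : IsLayerSolution L V g F) (hL : 0 < L) :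
    ContinuousOn (dens L F) (Ici 0) := by
  rw [Metric.continuousOn_iff]
  intro b hb ε hε
  obtain ⟨δ, hδ, h⟩ := hF.uniform hL (half_pos hε)
  refine ⟨δ, hδ, fun a ha hab => ?_⟩
  rw [Real.dist_eq] at *
  obtain ⟨h1, h2⟩ := abs_lt.1 hab
  rcases le_total a b with hle | hle
  · rw [abs_sub_comm]
    linarith [h a b ha hle (by linarith)]
  · linarith [h b a hb hle (by linarith)]

/-- The Lyapunov functional: `∫ ξ² F dξ` has derivative `u² / 2 - V`. -/
theorem IsLayerSolution.hasDerivAt_moment (hF : IsLayerSolution L V g F) (hL : 0 < L) {y : ℝ}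
    (hy : 0 < y) : HasDerivAt (fun z => ∫ ξ in Ioo (-L) L, ξ * (ξ * F z ξ))
      ((dens L F y) ^ 2 / 2 - V) y := by
  rw [← hF.integral_id_sub hL hy.le]
  refine (hasDerivAt_integral_of_dominated_loc_of_deriv_le (bound := fun _ => L)
    (F' := fun z ξ => ξ * (Mfun (dens L F z) ξ - F z ξ))
    (Ioi_mem_nhds hy) ?_ ?_ ?_ ?_ (integrable_const _) ?_).2
  · exact Eventually.of_forall fun z => by
      apply Measurable.aestronglyMeasurable
      have := hF.measF z
      fun_prop
  · exact integrable_id_mul (integrable_id_mul (hF.integrable hy.le))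
  · apply Measurable.aestronglyMeasurable
    have := hF.measF y
    have := measurable_Mfun (dens L F y)
    fun_prop
  · filter_upwards [ae_mem_Ioo L 0] with ξ h z hz
    rw [norm_mul]
    have h1 := hF.abs_Mfun_sub_le (dens L F z) (le_of_lt hz) h.1 h.2.1
    have h2 : |ξ| ≤ L := abs_le.2 ⟨h.1.1.le, h.1.2.le⟩
    calc ‖ξ‖ * ‖Mfun (dens L F z) ξ - F z ξ‖ ≤ L * 1 := by
          gcongr
          · exact h2
          · exact h1
      _ = L := mul_one L
  · filter_upwards [ae_mem_Ioo L 0] with ξ h z hz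
    have h0 := h.2.1
    refine (((hF.eqn' hL h.1 h0 hz).const_mul ξ).const_mul ξ).congr_deriv ?_
    field_simp

theorem IsLayerSolution.tendsto_sq (hF : IsLayerSolution L V g F) (hL : 0 < L) :
    Tendsto (fun y => (dens L F y) ^ 2) atTop (nhds (2 * V)) := by
  set G : ℝ → ℝ := fun z => ∫ ξ in Ioo (-L) L, ξ * (ξ * F z ξ) with hG
  have hGd : ∀ y, 0 < y → HasDerivAt G ((dens L F y) ^ 2 / 2 - V) y :=
    fun y hy => hF.hasDerivAt_moment hL hy
  have hGc : ContinuousOn G (Ici 1) := fun y hy =>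
    (hGd y (lt_of_lt_of_le one_pos hy)).continuousAt.continuousWithinAt
  have hanti : AntitoneOn G (Ici 1) := by
    refine antitoneOn_of_deriv_nonpos (convex_Ici 1) hGc ?_ ?_
    · intro y hy
      rw [interior_Ici, mem_Ioi] at hy
      exact (hGd y (by linarith)).differentiableAt.differentiableWithinAt
    · intro y hy
      rw [interior_Ici, mem_Ioi] at hy
      rw [(hGd y (by linarith)).deriv]
      exact hF.sq_le hL (by linarith)
  have hbd : ∀ y, 1 ≤ y → -∫ _ξ in Ioo (-L) L, L * L ≤ G y := by
    intro y hy
    refine (abs_le.1 (norm_integral_le_of_norm_le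
      (f := fun ξ => ξ * (ξ * F y ξ)) (integrable_const (L * L)) ?_)).1
    filter_upwards [ae_mem_Ioo L 0] with ξ h
    have h1 := hF.abs_le_one (by linarith : 0 ≤ y) h.1 h.2.1
    have h2 : |ξ| ≤ L := abs_le.2 ⟨h.1.1.le, h.1.2.le⟩
    rw [norm_mul, norm_mul]
    calc ‖ξ‖ * (‖ξ‖ * ‖F y ξ‖) ≤ L * (L * 1) := by
          gcongr
          · exact h2
          · exact h2
          · exact h1
      _ = L * L := by ring
  obtain ⟨l, hl⟩ : ∃ l, Tendsto G atTop (nhds l) := by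
    have hA : Antitone (fun y => G (max 1 y)) := fun a b hab =>
      hanti (le_max_left 1 a) (le_max_left 1 b) (max_le_max le_rfl hab)
    refine ⟨_, (tendsto_atTop_ciInf hA ⟨-∫ _ξ in Ioo (-L) L, L * L, ?_⟩).congr' ?_⟩
    · rintro _ ⟨y, rfl⟩; exact hbd _ (le_max_left 1 y)
    · filter_upwards [eventually_ge_atTop 1] with y hy
      simp [max_eq_right hy]
  rw [Metric.tendsto_nhds]
  intro ε hε
  obtain ⟨δ, hδ, hu⟩ := hF.uniform hL (show 0 < ε / (8 * L) by positivity)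
  have hlim : Tendsto (fun y => G y - G (y + δ)) atTop (nhds 0) := by
    simpa using hl.sub (hl.comp (tendsto_atTop_add_const_right _ δ tendsto_id))
  filter_upwards [hlim.eventually_lt_const (show 0 < δ * (ε / 4) by positivity),
    eventually_ge_atTop 1] with y hy h1
  -- The mean value theorem gives a point of `(y, y + δ)` where `V - u² / 2` is small.
  obtain ⟨c, hc, he⟩ := exists_hasDerivAt_eq_slope G (fun z => (dens L F z) ^ 2 / 2 - V)
    (show y < y + δ by linarith) (hGc.mono fun z hz => h1.trans hz.1)
    (fun z hz => hGd z (by linarith [hz.1]))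
  have h3 : V - (dens L F c) ^ 2 / 2 < ε / 4 := by
    rw [add_sub_cancel_left, eq_div_iff hδ.ne'] at he
    have : δ * (V - (dens L F c) ^ 2 / 2) < δ * (ε / 4) := by linarith
    exact lt_of_mul_lt_mul_left this hδ.le
  have h4 := hu y c (by linarith) hc.1.le hc.2.le
  have h5 := hF.abs_dens_le hL (by linarith : 0 ≤ y)
  have h6 := hF.abs_dens_le hL (by linarith [hc.1] : 0 ≤ c)
  have h7 := hF.sq_le hL (by linarith : 0 ≤ y)
  have h8 : (dens L F c) ^ 2 - (dens L F y) ^ 2 ≤ ε / 4 := by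
    have e1 : |(dens L F c - dens L F y) * (dens L F c + dens L F y)|
        ≤ ε / (8 * L) * (L + L) := by
      rw [abs_mul]
      gcongr
      exact (abs_add_le _ _).trans (add_le_add h6 h5)
    have e2 : ε / (8 * L) * (L + L) = ε / 4 := by field_simp; ring
    rw [e2] at e1
    calc _ = (dens L F c - dens L F y) * (dens L F c + dens L F y) := by ring
      _ ≤ _ := (le_abs_self _).trans e1
  rw [Real.dist_eq, abs_lt]
  constructor <;> linarith

/-! ### Sign of the limit and pointwise convergence -/

theorem IsLayerSolution.decay_eqn (hF : IsLayerSolution L V g F) (hL : 0 < L) {N ξ m : ℝ}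
    (hN : 0 ≤ N) (hξ : ξ ∈ Ioo (-L) L) (h0 : ξ ≠ 0)
    (hm : ∀ y, N < y → Mfun (dens L F y) ξ = m) :
    ContinuousOn (fun y => F y ξ - m) (Ici N) ∧
    ∀ y, N < y → ∃ d, HasDerivAt (fun y => F y ξ - m) d y ∧ ξ * d = -(F y ξ - m) := by
  refine ⟨((hF.cont ξ hξ h0).mono (Ici_subset_Ici.2 hN)).sub continuousOn_const, fun y hy => ?_⟩
  refine ⟨_, (hF.eqn' hL hξ h0 (hN.trans_lt hy)).sub_const m, ?_⟩
  rw [hm y hy]; field_simp; ring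

/-- If the density is positive beyond `N`, no outgoing particle (`ξ < 0`) is present at `N`. -/
theorem IsLayerSolution.zero_of_pos (hF : IsLayerSolution L V g F) (hL : 0 < L) {N ξ : ℝ}
    (hN : 0 ≤ N) (hξ : ξ ∈ Ioo (-L) L) (h0 : ξ < 0) (hu : ∀ y, N < y → 0 < dens L F y) :
    F N ξ = 0 := by
  obtain ⟨h1, h2⟩ := hF.decay_eqn hL hN hξ h0.ne (m := 0) (fun y hy => by
    have := hu y hy
    simp [Mfun, h0.not_gt, (show ¬ dens L F y < ξ by linarith)])
  have := bounded_neg (B := 1) h0 h1 h2 (fun y hy => by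
    simpa using hF.abs_le_one (hN.trans hy) hξ h0.ne) N le_rfl
  simpa using this

/-- In the shock case the density cannot be eventually positive. Beyond the last point `y₀` with
`u ≤ 0` there would be no outgoing particles, so `F(y₀, ·) ≥ 0` has integral `≤ 0`, hence vanishes
and `V = 0`; and if there is no such point, the flux at `y = 0` is that of `g` alone. -/
theorem IsLayerSolution.not_eventually_pos (hF : IsLayerSolution L V g F) (hL : 0 < L)
    (hV0 : 0 < V) (hshock : (∫ ξ in (0 : ℝ)..L, ξ * g ξ) < V) {N : ℝ}
    (hN : ∀ y, N ≤ y → 0 < dens L F y) : False := by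
  by_cases hZ : ∃ y, 0 ≤ y ∧ dens L F y ≤ 0
  · have hcl : IsClosed {y | y ∈ Ici (0 : ℝ) ∧ dens L F y ≤ 0} := by
      have := (hF.continuousOn_dens hL).preimage_isClosed_of_isClosed isClosed_Ici
        (isClosed_Iic (a := (0 : ℝ)))
      exact this
    have hbdd : BddAbove {y | y ∈ Ici (0 : ℝ) ∧ dens L F y ≤ 0} := by
      refine ⟨N, fun y hy => ?_⟩
      by_contra hlt
      linarith [hN y (by linarith), hy.2]
    obtain ⟨hy0, hy1⟩ := hcl.csSup_mem hZ hbdd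
    set y₀ := sSup {y | y ∈ Ici (0 : ℝ) ∧ dens L F y ≤ 0}
    have hpos : ∀ y, y₀ < y → 0 < dens L F y := by
      intro y hy
      by_contra hle
      have : y ≤ y₀ := le_csSup hbdd ⟨le_of_lt (lt_of_le_of_lt hy0 hy), not_lt.1 hle⟩
      linarith
    have hnn : 0 ≤ᵐ[volume.restrict (Ioo (-L) L)] F y₀ := by
      filter_upwards [ae_mem_Ioo L 0] with ξ h
      rcases lt_or_gt_of_ne h.2.1 with h0 | h0
      · rw [hF.zero_of_pos hL hy0 h.1 h0 hpos]; simp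
      · exact (hF.pos hy0 h.1 h0).1
    have hz : F y₀ =ᵐ[volume.restrict (Ioo (-L) L)] 0 :=
      (integral_eq_zero_iff_of_nonneg_ae hnn (hF.integrable hy0)).1
        (le_antisymm hy1 (integral_nonneg_of_ae hnn))
    have hf := hF.flux' hL hy0
    rw [integral_eq_zero_of_ae] at hf
    · linarith
    · filter_upwards [hz] with ξ h
      simp [h]
  · push Not at hZ
    have hf := hF.flux' hL le_rfl
    have e : ∫ ξ in Ioo (-L) L, ξ * F 0 ξ
        = ∫ ξ in Ioo (-L) L, (Ioo 0 L).indicator (fun ξ => ξ * g ξ) ξ := by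
      refine integral_congr_ae ?_
      filter_upwards [ae_mem_Ioo L 0] with ξ h
      rcases lt_or_gt_of_ne h.2.1 with h0 | h0
      · rw [hF.zero_of_pos hL le_rfl h.1 h0 (fun y hy => hZ y hy.le)]
        simp [indicator, h0.not_gt]
      · rw [indicator_of_mem (show ξ ∈ Ioo 0 L from ⟨h0, h.1.2⟩), hF.bdry ξ ⟨h0, h.1.2⟩]
    rw [e, setIntegral_indicator measurableSet_Ioo, inter_eq_right.2
      (Ioo_subset_Ioo_left (by linarith)), ← integral_Ioc_eq_integral_Ioo,
      ← intervalIntegral.integral_of_le hL.le] at hf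
    linarith

theorem IsLayerSolution.tendsto_dens (hF : IsLayerSolution L V g F) (hL : 0 < L)
    (hV0 : 0 < V) (hshock : (∫ ξ in (0 : ℝ)..L, ξ * g ξ) < V) :
    Tendsto (dens L F) atTop (nhds (-Real.sqrt (2 * V))) := by
  have hsq := hF.tendsto_sq hL
  obtain ⟨N, hN⟩ := eventually_atTop.1 (hsq.eventually_const_lt (show 0 < 2 * V by linarith))
  -- Beyond `max 0 N` the density has no zero, hence a constant sign.
  have hneg : ∀ y, max 0 N ≤ y → dens L F y < 0 := by
    by_contra! hcon
    obtain ⟨a, ha, hua⟩ := hcon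
    have ha0 : 0 ≤ a := (le_max_left _ _).trans ha
    have haN : N ≤ a := (le_max_right _ _).trans ha
    refine hF.not_eventually_pos hL hV0 hshock (N := a) fun b hb => ?_
    by_contra! hub
    obtain ⟨c, hc, hc0⟩ := intermediate_value_Icc' hb
      ((hF.continuousOn_dens hL).mono fun z hz => ha0.trans hz.1) ⟨hub, hua⟩
    have := hN c (haN.trans hc.1)
    simp [hc0] at this
  refine (hsq.sqrt.neg).congr' ?_
  filter_upwards [eventually_ge_atTop (max 0 N)] with y hy
  rw [Real.sqrt_sq_eq_abs, abs_of_neg (hneg y hy), neg_neg]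

theorem IsLayerSolution.tendsto_pointwise (hF : IsLayerSolution L V g F) (hL : 0 < L) {v ξ : ℝ}
    (hu : Tendsto (dens L F) atTop (nhds v)) (hξ : ξ ∈ Ioo (-L) L) (h0 : ξ ≠ 0) (hv : ξ ≠ v) :
    Tendsto (fun y => F y ξ - Mfun v ξ) atTop (nhds 0) := by
  obtain ⟨N, hN⟩ := eventually_atTop.1 (eventually_Mfun_eq hu hv)
  obtain ⟨h1, h2⟩ := hF.decay_eqn hL (le_max_left 0 N) hξ h0
    (fun y hy => hN y ((le_max_right 0 N).trans hy.le))
  rcases lt_or_gt_of_ne h0 with h | h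
  · have h3 := bounded_neg (B := 1) h h1 h2 (fun y hy => by
      rw [abs_sub_comm]
      exact hF.abs_Mfun_sub_le _ ((le_max_left 0 N).trans hy) hξ h0)
    refine tendsto_const_nhds.congr' ?_
    filter_upwards [eventually_ge_atTop (max 0 N)] with y hy using (h3 y hy).symm
  · exact decay_pos h h1 h2

end Layer

theorem stmt10 (L V : ℝ) (hL : 0 < L) (g : ℝ → ℝ) (hgm : Measurable g)
    (hg01 : ∀ ξ ∈ Set.Ioo (0 : ℝ) L, g ξ ∈ Set.Icc (0 : ℝ) 1)
    (hV : V ∈ Set.Icc 0 (L ^ 2 / 2))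
    (F : ℝ → ℝ → ℝ) (hF : IsLayerSolution L V g F)
    (hshock : (∫ ξ in (0 : ℝ)..L, ξ * g ξ) < V) :
    Tendsto (fun y => ∫ ξ in (-L)..L, |F y ξ - Mfun (-Real.sqrt (2 * V)) ξ|)
      atTop (nhds 0) := by
  have hV0 : 0 < V := by
    refine lt_of_le_of_lt ?_ hshock
    rw [intervalIntegral.integral_of_le hL.le, integral_Ioc_eq_integral_Ioo]
    exact setIntegral_nonneg measurableSet_Ioo fun ξ h => mul_nonneg h.1.le (hg01 ξ h).1
  have hu := hF.tendsto_dens hL hV0 hshock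
  set v := -Real.sqrt (2 * V)
  simp_rw [interval_eq_Ioo hL]
  rw [← integral_zero ℝ ℝ (μ := volume.restrict (Ioo (-L) L))]
  refine tendsto_integral_filter_of_dominated_convergence (fun _ => (1 : ℝ)) ?_ ?_
    (integrable_const _) ?_
  · exact Eventually.of_forall fun y =>
      ((hF.measF y).sub (measurable_Mfun v)).abs.aestronglyMeasurable
  · filter_upwards [eventually_ge_atTop 0] with y hy
    filter_upwards [ae_mem_Ioo L 0] with ξ h
    rw [Real.norm_eq_abs, abs_abs, abs_sub_comm]
    exact hF.abs_Mfun_sub_le v hy h.1 h.2.1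
  · filter_upwards [ae_mem_Ioo L v] with ξ h
    simpa using (hF.tendsto_pointwise hL hu h.1 h.2.1 h.2.2).abs
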